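/- arXiv:2509.19238 — 2 statements merged into one kernel-verified Lean document; each statement's English description precedes it below -/
import Mathlib

section
/- Let A be a unital C*-algebra, J ⊆ A a closed two-sided ideal, and X ⊆ A an operator system. Let π : B(X,J) → B(H) be a unital *-representation such that the restriction π|_{M₂(J)} is nondegenerate. Then π has the unique extension property with respect to S(X,J). -/
noncomputable section

namespace ArvesonCounterexample

/-- The C*-subalgebra of `A` generated by a subset `X`. -/
def cstarGen (A : Type*) [CStarAlgebra A] (X : Set A) : StarSubalgebra ℂ A :=
  (StarAlgebra.adjoin ℂ X).topologicalClosure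

/-- The set `J + ℂ·1`. -/
def unitize (A : Type*) [CStarAlgebra A] (J : Set A) : Set A :=
  {d | ∃ j ∈ J, ∃ c : ℂ, d = j + c • (1 : A)}

/-- The operator system `S(X,J)` inside `M₂(A)`, consisting of the matrices
`[[x, j], [k, b]]` with `x ∈ X`, `j, k ∈ J` and `b ∈ J + ℂ1`. -/
def opSys (A : Type*) [CStarAlgebra A] (X J : Set A) : Set (Matrix (Fin 2) (Fin 2) A) :=
  {m | m 0 0 ∈ X ∧ m 0 1 ∈ J ∧ m 1 0 ∈ J ∧ m 1 1 ∈ unitize A J}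

/-- The C*-algebra `B(X,J)` generated by `S(X,J)` inside `M₂(A)`. -/
def calg (A : Type*) [CStarAlgebra A] (X J : Set A) :
    StarSubalgebra ℂ (Matrix (Fin 2) (Fin 2) A) :=
  (StarAlgebra.adjoin ℂ (opSys A X J)).topologicalClosure

/-- The C*-subalgebra `C*(X) + J` of `A` (the C*-algebra generated by `C*(X)` and `J`;
since `J` is a closed two-sided ideal this coincides with the sum `C*(X) + J`). -/
def cstarPlus (A : Type*) [CStarAlgebra A] (X J : Set A) : StarSubalgebra ℂ A :=
  (StarAlgebra.adjoin ℂ ((cstarGen A X : Set A) ∪ J)).topologicalClosure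

/-- `J` is a closed two-sided ideal of `A`. -/
structure IsClosedTwoSidedIdeal {A : Type*} [CStarAlgebra A] (J : Set A) : Prop where
  zero_mem : (0 : A) ∈ J
  add_mem : ∀ x ∈ J, ∀ y ∈ J, x + y ∈ J
  mul_mem_left : ∀ (a : A), ∀ j ∈ J, a * j ∈ J
  mul_mem_right : ∀ (a : A), ∀ j ∈ J, j * a ∈ J
  isClosed : IsClosed J

/-- `X` is an operator system in `A`: a unital norm-closed self-adjoint subspace. -/
structure IsOperatorSystem {A : Type*} [CStarAlgebra A] (X : Set A) : Prop where
  one_mem : (1 : A) ∈ X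
  add_mem : ∀ x ∈ X, ∀ y ∈ X, x + y ∈ X
  smul_mem : ∀ (c : ℂ), ∀ x ∈ X, c • x ∈ X
  star_mem : ∀ x ∈ X, star x ∈ X
  isClosed : IsClosed X

/-- A map `φ` between star rings is completely positive if each matrix amplification maps
positive elements to positive elements (positivity expressed algebraically as being of the
form `star y * y`). -/
def IsCompletelyPositive {R B : Type*} [Ring R] [StarRing R] [Ring B] [StarRing B]
    (φ : R → B) : Prop :=
  ∀ (n : ℕ) (y : Matrix (Fin n) (Fin n) R),
    ∃ z : Matrix (Fin n) (Fin n) B, (star y * y).map φ = star z * z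

/-- A unital completely positive (linear) map from `R` to `B(H)`. -/
structure IsUCPMap {R : Type*} [Ring R] [Algebra ℂ R] [StarRing R]
    {H : Type*} [NormedAddCommGroup H] [InnerProductSpace ℂ H] [CompleteSpace H]
    (φ : R → (H →L[ℂ] H)) : Prop where
  map_add : ∀ x y, φ (x + y) = φ x + φ y
  map_smul : ∀ (c : ℂ) (x : R), φ (c • x) = c • φ x
  cp : IsCompletelyPositive φ
  map_one : φ 1 = 1

/-- A (not necessarily unital) *-representation of `R` on `B(H)`. -/
structure IsStarRep {R : Type*} [Ring R] [Algebra ℂ R] [StarRing R]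
    {H : Type*} [NormedAddCommGroup H] [InnerProductSpace ℂ H] [CompleteSpace H]
    (π : R → (H →L[ℂ] H)) : Prop where
  map_add : ∀ x y, π (x + y) = π x + π y
  map_smul : ∀ (c : ℂ) (x : R), π (c • x) = c • π x
  map_mul : ∀ x y, π (x * y) = π x * π y
  map_star : ∀ x, π (star x) = star (π x)

/-- A unital *-representation of `R` on `B(H)`. -/
structure IsUnitalStarRep {R : Type*} [Ring R] [Algebra ℂ R] [StarRing R]
    {H : Type*} [NormedAddCommGroup H] [InnerProductSpace ℂ H] [CompleteSpace H]
    (π : R → (H →L[ℂ] H)) : Prop where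
  toIsStarRep : IsStarRep π
  map_one : π 1 = 1

/-- A unital *-representation `ρ` of `B(X,J)` has the unique extension property with respect
to `S(X,J)` if every unital completely positive map on `B(X,J)` agreeing with `ρ` on
`S(X,J)` equals `ρ`. -/
def HasUEP {A : Type*} [CStarAlgebra A] (X J : Set A)
    {H : Type*} [NormedAddCommGroup H] [InnerProductSpace ℂ H] [CompleteSpace H]
    (ρ : ↥(calg A X J) → (H →L[ℂ] H)) : Prop :=
  ∀ Ψ : ↥(calg A X J) → (H →L[ℂ] H), IsUCPMap Ψ →
    (∀ m : ↥(calg A X J), (m : Matrix (Fin 2) (Fin 2) A) ∈ opSys A X J → Ψ m = ρ m) →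
    Ψ = ρ

/-- `ρ` annihilates the ideal `M₂(J)` of `B(X,J)`. -/
def AnnihilatesM2 {A : Type*} [CStarAlgebra A] (X J : Set A)
    {H : Type*} [NormedAddCommGroup H] [InnerProductSpace ℂ H] [CompleteSpace H]
    (ρ : ↥(calg A X J) → (H →L[ℂ] H)) : Prop :=
  ∀ m : ↥(calg A X J), (∀ i j : Fin 2, (m : Matrix (Fin 2) (Fin 2) A) i j ∈ J) → ρ m = 0

/-- `π` (defined on `C*(X)+J`) annihilates `J`. -/
def AnnihilatesJ {A : Type*} [CStarAlgebra A] (X J : Set A)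
    {H : Type*} [NormedAddCommGroup H] [InnerProductSpace ℂ H] [CompleteSpace H]
    (π : ↥(cstarPlus A X J) → (H →L[ℂ] H)) : Prop :=
  ∀ x : ↥(cstarPlus A X J), (x : A) ∈ J → π x = 0

/-- The pair `(ρ, π)` is `(X,J)`-adapted: writing an element of `B(X,J)` as `[[a,b],[c,d]]`
with `a ∈ C*(X)+J`, `b, c ∈ J`, `d ∈ J + ℂ1`, and letting `χ : J + ℂ1 → ℂ` be the quotient
character with kernel `J` (so `χ d = c` exactly when `d - c•1 ∈ J`), one has
`ρ [[a,b],[c,d]] - χ(d)•1 = π (a - χ(d)•1)`. -/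
def IsAdaptedPair {A : Type*} [CStarAlgebra A] (X J : Set A)
    {H : Type*} [NormedAddCommGroup H] [InnerProductSpace ℂ H] [CompleteSpace H]
    (ρ : ↥(calg A X J) → (H →L[ℂ] H)) (π : ↥(cstarPlus A X J) → (H →L[ℂ] H)) : Prop :=
  ∀ (m : ↥(calg A X J)) (c : ℂ) (a' : ↥(cstarPlus A X J)),
    (m : Matrix (Fin 2) (Fin 2) A) 1 1 - c • (1 : A) ∈ J →
    (a' : A) = (m : Matrix (Fin 2) (Fin 2) A) 0 0 - c • (1 : A) →
    ρ m - c • (1 : H →L[ℂ] H) = π a'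

/-!
The matrices in `M₂(J)` supported on the second column form a left ideal of `B(X,J)` contained in
`S(X,J)`. A unital completely positive `Ψ` agreeing with `ρ` there satisfies
`Ψ(t⋆t) = Ψ(t)⋆Ψ(t)` for such `t`, so `t` lies in its multiplicative domain and
`Ψ(b) ρ(t) = Ψ(bt) = ρ(bt) = ρ(b) ρ(t)` for every `b`: thus `(Ψ(b) - ρ(b)) ρ(t) = 0`.
If `m ∈ M₂(J)` has columns `u` and `v`, then `mm⋆ = ss⋆ + tt⋆`, where `s` and `t` carry `u`
and `v` in their second column. Hence `(Ψ(b) - ρ(b)) ρ(m) ρ(m)⋆ = 0`, so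
`(Ψ(b) - ρ(b)) ρ(m) = 0`, and nondegeneracy gives `Ψ(b) = ρ(b)`.

The multiplicative domain argument is an equality case of Cauchy–Schwarz: for
`(x₀, x₁, x₂) = (1, t, b⋆)`, complete positivity makes `Ψ(xᵢ⋆xⱼ)` the Gram matrix of vectors `zᵢ`
with entries in `B(H)`, and `z₁ = z₀ Ψ(t)` because `⟨z₁, z₁⟩ = ⟨z₀, z₁⟩⋆ ⟨z₀, z₁⟩`.
-/

section Gram

variable {ι B : Type*} [Fintype ι]

theorem star_dotProduct_self_eq_zero [NonUnitalNormedRing B] [StarRing B] [CStarRing B]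
    [PartialOrder B] [StarOrderedRing B] {x : ι → B} : star x ⬝ᵥ x = 0 ↔ x = 0 := by
  simp only [dotProduct, Pi.star_apply]
  rw [Finset.sum_eq_zero_iff_of_nonneg fun k _ ↦ star_mul_self_nonneg (x k)]
  simp only [Finset.mem_univ, true_imp_iff, CStarRing.star_mul_self_eq_zero_iff, funext_iff,
    Pi.zero_apply]

theorem eq_op_smul_of_star_dotProduct_self_eq [NormedRing B] [StarRing B] [CStarRing B]
    [PartialOrder B] [StarOrderedRing B] {x y : ι → B} (hx : star x ⬝ᵥ x = 1)
    (hy : star y ⬝ᵥ y = star (star x ⬝ᵥ y) * (star x ⬝ᵥ y)) :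
    y = MulOpposite.op (star x ⬝ᵥ y) • x := by
  set a := star x ⬝ᵥ y with ha
  have hyx : star y ⬝ᵥ x = star a := Matrix.star_dotProduct y x
  have hstar : star (MulOpposite.op a • x) = star a • star x := by ext; simp
  have horth : star x ⬝ᵥ (y - MulOpposite.op a • x) = 0 := by
    rw [dotProduct_sub, dotProduct_smul, hx, ← ha, op_smul_eq_mul, one_mul, sub_self]
  rw [← sub_eq_zero, ← star_dotProduct_self_eq_zero]
  calc star (y - MulOpposite.op a • x) ⬝ᵥ (y - MulOpposite.op a • x)
      = star y ⬝ᵥ (y - MulOpposite.op a • x) := by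
        rw [star_sub, sub_dotProduct, hstar, smul_dotProduct, horth, smul_zero, sub_zero]
    _ = 0 := by rw [dotProduct_sub, dotProduct_smul, hy, hyx, op_smul_eq_mul, sub_self]

end Gram

section CompletelyPositive

variable {R B : Type*} [Ring R] [StarRing R]

theorem IsCompletelyPositive.exists_map_star_mul_eq_star_dotProduct [Ring B] [StarRing B]
    {φ : R → B} (hφ : IsCompletelyPositive φ) {n : ℕ} (x : Fin (n + 1) → R) :
    ∃ z : Fin (n + 1) → Fin (n + 1) → B, ∀ i j, φ (star (x i) * x j) = star (z i) ⬝ᵥ z j := by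
  obtain ⟨z, hz⟩ := hφ (n + 1) (Matrix.of (Fin.cons x 0))
  refine ⟨z.transpose, fun i j ↦ ?_⟩
  simpa [Matrix.mul_apply, Fin.sum_univ_succ (n := n), dotProduct] using congr_fun₂ hz i j

theorem IsCompletelyPositive.map_mul_of_map_star_mul_self [NormedRing B] [StarRing B]
    [CStarRing B] [PartialOrder B] [StarOrderedRing B] {φ : R → B}
    (hφ : IsCompletelyPositive φ) (hone : φ 1 = 1) {t : R}
    (ht : φ (star t * t) = star (φ t) * φ t) (b : R) : φ (b * t) = φ b * φ t := by
  obtain ⟨z, hz⟩ := hφ.exists_map_star_mul_eq_star_dotProduct ![1, t, star b]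
  have h00 : star (z 0) ⬝ᵥ z 0 = 1 := by simpa [hone] using (hz 0 0).symm
  have h01 : star (z 0) ⬝ᵥ z 1 = φ t := by simpa using (hz 0 1).symm
  have h11 : star (z 1) ⬝ᵥ z 1 = star (φ t) * φ t := by simpa [ht] using (hz 1 1).symm
  have h20 : star (z 2) ⬝ᵥ z 0 = φ b := by simpa using (hz 2 0).symm
  have h21 : star (z 2) ⬝ᵥ z 1 = φ (b * t) := by simpa using (hz 2 1).symm
  have hz1 : z 1 = MulOpposite.op (φ t) • z 0 := by
    rw [← h01]
    exact eq_op_smul_of_star_dotProduct_self_eq h00 (by rw [h11, h01])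
  rw [← h21, hz1, dotProduct_smul, h20, op_smul_eq_mul]

end CompletelyPositive

section StarRep

variable {R : Type*} [Ring R] [Algebra ℂ R] [StarRing R]
  {H : Type*} [NormedAddCommGroup H] [InnerProductSpace ℂ H] [CompleteSpace H]
  {Ψ ρ : R → (H →L[ℂ] H)}

theorem IsUCPMap.sub_mul_eq_zero_of_eqOn_ideal (hΨ : IsUCPMap Ψ) (hρ : IsStarRep ρ) {L : Ideal R}
    (hL : Set.EqOn Ψ ρ L) {t : R} (ht : t ∈ L) (b : R) : (Ψ b - ρ b) * ρ t = 0 := by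
  have hmul (c : R) : Ψ (c * t) = ρ c * ρ t := by
    rw [hL (L.mul_mem_left c ht), hρ.map_mul]
  have hΨt : Ψ (star t * t) = star (Ψ t) * Ψ t := by rw [hmul, hρ.map_star, hL ht]
  rw [sub_mul, ← hmul, hΨ.cp.map_mul_of_map_star_mul_self hΨ.map_one hΨt, hL ht, sub_self]

theorem IsStarRep.mul_eq_zero_of_mul_map_mul_star_eq_zero (hρ : IsStarRep ρ) {T : H →L[ℂ] H}
    {m : R} (h : T * ρ (m * star m) = 0) : T * ρ m = 0 := by
  rw [← CStarRing.mul_star_self_eq_zero_iff]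
  calc T * ρ m * star (T * ρ m) = T * ρ (m * star m) * star T := by
        rw [hρ.map_mul, hρ.map_star, star_mul]; simp only [mul_assoc]
    _ = 0 := by rw [h, zero_mul]

end StarRep

section OperatorSystem

variable {A : Type*} [CStarAlgebra A]

theorem opSys_subset_calg {X J : Set A} : opSys A X J ⊆ calg A X J :=
  (StarAlgebra.subset_adjoin ℂ _).trans (StarSubalgebra.le_topologicalClosure _)

/-- The set `J` bundled as an `Ideal`, which over a noncommutative ring means a left ideal; it
provides the ideal structure that `secondColumnIdeal` takes as input. -/
def IsClosedTwoSidedIdeal.toIdeal {J : Set A} (hJ : IsClosedTwoSidedIdeal J) : Ideal A where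
  carrier := J
  zero_mem' := hJ.zero_mem
  add_mem' hx hy := hJ.add_mem _ hx _ hy
  smul_mem' := hJ.mul_mem_left

/-- The left ideal of `B(X,J)` formed by the matrices `[[0, j], [0, k]]` with `j, k ∈ J`. It lies in
`S(X,J)`, so it is where a map agreeing with `ρ` on `S(X,J)` can be controlled. -/
def secondColumnIdeal (X : Set A) (J : Ideal A) : Ideal (calg A X J) where
  carrier := {t | ∀ i, t.1 i 0 = 0 ∧ t.1 i 1 ∈ J}
  zero_mem' i := by simp
  add_mem' hs ht i := by simpa [hs i, ht i] using J.add_mem (hs i).2 (ht i).2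
  smul_mem' b t ht i := by
    have hmem := J.add_mem (J.mul_mem_left (b.1 i 0) (ht 0).2) (J.mul_mem_left (b.1 i 1) (ht 1).2)
    simpa [Matrix.mul_apply, (ht 0).1, (ht 1).1] using hmem

variable {X : Set A} {J : Ideal A}

theorem mem_opSys_of_mem_secondColumnIdeal (hX : 0 ∈ X) {t : calg A X J}
    (ht : t ∈ secondColumnIdeal X J) : t.1 ∈ opSys A X J :=
  ⟨(ht 0).1 ▸ hX, (ht 0).2, (ht 1).1 ▸ J.zero_mem, t.1 1 1, (ht 1).2, 0, by simp⟩

theorem exists_mem_secondColumnIdeal (hX : 0 ∈ X) {v : Fin 2 → A} (hv : ∀ i, v i ∈ J) :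
    ∃ t ∈ secondColumnIdeal X J, t.1 = !![0, v 0; 0, v 1] := by
  have hmem : !![0, v 0; 0, v 1] ∈ opSys A X J :=
    ⟨hX, hv 0, J.zero_mem, v 1, hv 1, 0, by simp⟩
  exact ⟨⟨_, opSys_subset_calg hmem⟩, Fin.forall_fin_two.mpr ⟨⟨rfl, hv 0⟩, rfl, hv 1⟩, rfl⟩

theorem exists_mul_star_self_eq_add (hX : 0 ∈ X) {m : calg A X J} (hm : ∀ i j, m.1 i j ∈ J) :
    ∃ s ∈ secondColumnIdeal X J, ∃ t ∈ secondColumnIdeal X J,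
      m * star m = s * star s + t * star t := by
  obtain ⟨s, hs, hs_eq⟩ := exists_mem_secondColumnIdeal hX fun i ↦ hm i 0
  obtain ⟨t, ht, ht_eq⟩ := exists_mem_secondColumnIdeal hX fun i ↦ hm i 1
  refine ⟨s, hs, t, ht, Subtype.ext (Matrix.ext fun i j ↦ ?_)⟩
  fin_cases i <;> fin_cases j <;>
    simp [hs_eq, ht_eq, Matrix.mul_apply, Matrix.star_apply, -Matrix.cons_mul]

variable {H : Type*} [NormedAddCommGroup H] [InnerProductSpace ℂ H] [CompleteSpace H]

theorem IsUCPMap.sub_mul_eq_zero_of_eqOn_opSys (hX : 0 ∈ X) {Ψ ρ : calg A X J → (H →L[ℂ] H)}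
    (hΨ : IsUCPMap Ψ) (hρ : IsStarRep ρ) (h : ∀ s : calg A X J, s.1 ∈ opSys A X J → Ψ s = ρ s)
    {m : calg A X J} (hm : ∀ i j, m.1 i j ∈ J) (b : calg A X J) : (Ψ b - ρ b) * ρ m = 0 := by
  have hcol {t : calg A X J} (ht : t ∈ secondColumnIdeal X J) : (Ψ b - ρ b) * ρ t = 0 :=
    hΨ.sub_mul_eq_zero_of_eqOn_ideal hρ
      (fun s hs ↦ h s (mem_opSys_of_mem_secondColumnIdeal hX hs)) ht b
  obtain ⟨s, hs, t, ht, hst⟩ := exists_mul_star_self_eq_add hX hm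
  refine hρ.mul_eq_zero_of_mul_map_mul_star_eq_zero ?_
  calc (Ψ b - ρ b) * ρ (m * star m)
      = (Ψ b - ρ b) * ρ s * ρ (star s) + (Ψ b - ρ b) * ρ t * ρ (star t) := by
        simp only [hst, hρ.map_add, hρ.map_mul, mul_add, mul_assoc]
    _ = 0 := by rw [hcol hs, hcol ht, zero_mul, zero_mul, add_zero]

end OperatorSystem

theorem stmt3_general {A : Type*} [CStarAlgebra A] (X : Set A) (J : Ideal A) (hX : 0 ∈ X)
    {H : Type*} [NormedAddCommGroup H] [InnerProductSpace ℂ H] [CompleteSpace H]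
    (ρ : calg A X J → (H →L[ℂ] H)) (hρ : IsStarRep ρ)
    (hnondeg : Dense (Submodule.span ℂ
      {v : H | ∃ (m : calg A X J) (ξ : H), (∀ i j, m.1 i j ∈ J) ∧ v = ρ m ξ} : Set H)) :
    HasUEP X J ρ := by
  intro Ψ hΨ hagree
  funext b
  rw [← sub_eq_zero]
  refine ContinuousLinearMap.ext_on hnondeg ?_
  rintro _ ⟨m, ξ, hm, rfl⟩
  exact DFunLike.congr_fun (hΨ.sub_mul_eq_zero_of_eqOn_opSys hX hρ hagree hm b) ξ

/-- Theorem 2.4: if `ρ : B(X,J) → B(H)` is a unital *-representation whose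
restriction to the ideal `M₂(J)` is nondegenerate, then `ρ` has the unique extension
property with respect to `S(X,J)`. -/
theorem stmt3 {A : Type*} [CStarAlgebra A] (X J : Set A)
    (hX : IsOperatorSystem X) (hJ : IsClosedTwoSidedIdeal J)
    {H : Type*} [NormedAddCommGroup H] [InnerProductSpace ℂ H] [CompleteSpace H]
    (ρ : ↥(calg A X J) → (H →L[ℂ] H))
    (hρ : IsUnitalStarRep ρ)
    (hnondeg : closure (Submodule.span ℂ
        {v : H | ∃ (m : ↥(calg A X J)) (ξ : H),
          (∀ i j : Fin 2, (m : Matrix (Fin 2) (Fin 2) A) i j ∈ J) ∧ v = ρ m ξ} : Set H)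
      = Set.univ) :
    HasUEP X J ρ :=
  stmt3_general X hJ.toIdeal (by simpa using hX.smul_mem 0 1 hX.one_mem) ρ hρ.toIsStarRep
    (dense_iff_closure_eq.mpr hnondeg)

end ArvesonCounterexample
end
end

section
/- Let A be a unital C*-algebra, J ⊆ A a closed two-sided ideal, and X ⊆ A an operator system. Let Π : B(X,J) → B(H) be a unital *-representation annihilating M₂(J), and let π : C*(X)+J → B(H) be the unique *-representation annihilating J such that the pair (Π,π) is (X,J)-adapted. Then the following are equivalent: (i) Π has the unique extension property with respect to S(X,J); (ii) π is the unique contractive completely positive extension of π|_X to C*(X)+J. -/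
noncomputable section

namespace ArvesonCounterexample

/-!
A contractive completely positive map `φ` on `C*(X) + J` gives the unital completely positive map
`[[a, j], [k, d]] ↦ φ a + χ(d)(1 - φ 1)` on `B(X,J)`, which is adapted to `φ`. Conversely, a unital
completely positive map `Ψ` on `B(X,J)` that agrees with `ρ` on `S(X,J)` is adapted to its
restriction to the top left corner, because `[[a, j], [k, d]]` is the sum of the corner element
`a - χ(d)1` and of `[[χ(d)1, j], [k, d]] ∈ S(X,J)`. This corner lies in `B(X,J)` because every
element of `J` is a limit of products of two elements of `J`. In an adapted pair each map determines
the other, so uniqueness of extensions on one side is uniqueness on the other.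
-/

section CStarPreliminaries

variable {A : Type*} [CStarAlgebra A]

theorem norm_mul_cfc_star_mul_self_sq (a : A) {f : ℝ → ℝ}
    (hf : ContinuousOn f (spectrum ℝ (star a * a))) :
    ‖a * cfc f (star a * a)‖ ^ 2 = ‖cfc (fun t => f t * (t * f t)) (star a * a)‖ := by
  have hsa : star (cfc f (star a * a)) = cfc f (star a * a) :=
    (cfc_predicate f (star a * a)).star_eq
  rw [cfc_mul f (fun t => t * f t) _ hf (continuousOn_id.mul hf),
    cfc_mul (fun t => t) f _ continuousOn_id hf, cfc_id' ℝ (star a * a), sq,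
    ← CStarRing.norm_star_mul_self, star_mul, hsa]
  simp only [mul_assoc]

theorem continuousOn_inv_add_const {s : Set ℝ} (hs : ∀ t ∈ s, 0 ≤ t) {δ : ℝ} (hδ : 0 < δ) :
    ContinuousOn (fun t : ℝ => (t + δ)⁻¹) s :=
  ContinuousOn.inv₀ (by fun_prop) fun t ht => (add_pos_of_nonneg_of_pos (hs t ht) hδ).ne'

theorem norm_mul_cfc_mul_inv_add_const_sq_le (a : A) {δ : ℝ} (hδ : 0 < δ) :
    ‖a * cfc (fun t : ℝ => δ * (t + δ)⁻¹) (star a * a)‖ ^ 2 ≤ δ := by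
  have hpos : ∀ t ∈ spectrum ℝ (star a * a), 0 ≤ t := fun _ => spectrum_star_mul_self_nonneg _
  have hcont : ContinuousOn (fun t : ℝ => δ * (t + δ)⁻¹) (spectrum ℝ (star a * a)) :=
    continuousOn_const.mul (continuousOn_inv_add_const hpos hδ)
  rw [norm_mul_cfc_star_mul_self_sq a hcont]
  refine norm_cfc_le hδ.le fun t ht => ?_
  have ht0 := hpos t ht
  rw [Real.norm_of_nonneg (by positivity)]
  have hδ1 : δ * (t + δ)⁻¹ ≤ 1 := mul_inv_le_one_of_le₀ (by linarith) (by positivity)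
  have ht1 : t * (t + δ)⁻¹ ≤ 1 := mul_inv_le_one_of_le₀ (by linarith) (by positivity)
  calc δ * (t + δ)⁻¹ * (t * (δ * (t + δ)⁻¹))
      = δ * ((δ * (t + δ)⁻¹) * (t * (t + δ)⁻¹)) := by ring
    _ ≤ δ * 1 := by gcongr; exact mul_le_one₀ hδ1 (by positivity) ht1
    _ = δ := mul_one δ

theorem one_sub_mul_cfc_inv_add_const {h : A} (hsa : IsSelfAdjoint h)
    (hpos : ∀ t ∈ spectrum ℝ h, 0 ≤ t) {δ : ℝ} (hδ : 0 < δ) :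
    1 - h * cfc (fun t : ℝ => (t + δ)⁻¹) h = cfc (fun t : ℝ => δ * (t + δ)⁻¹) h := by
  have hinv := continuousOn_inv_add_const hpos hδ
  have hmul : ContinuousOn (fun t : ℝ => t * (t + δ)⁻¹) (spectrum ℝ h) := continuousOn_id.mul hinv
  calc 1 - h * cfc (fun t : ℝ => (t + δ)⁻¹) h
      = cfc (fun _ => (1 : ℝ)) h - cfc (fun t : ℝ => t * (t + δ)⁻¹) h := by
        rw [cfc_const_one ℝ h, cfc_mul (fun t : ℝ => t) _ h continuousOn_id hinv, cfc_id' ℝ h]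
    _ = cfc (fun t : ℝ => 1 - t * (t + δ)⁻¹) h :=
        (cfc_sub (fun _ => (1 : ℝ)) _ h continuousOn_const hmul).symm
    _ = cfc (fun t : ℝ => δ * (t + δ)⁻¹) h := cfc_congr fun t ht => by
        have := (add_pos_of_nonneg_of_pos (hpos t ht) hδ).ne'
        field_simp
        ring

theorem mem_closure_range_mul_star_mul_self_mul (a : A) :
    a ∈ closure (Set.range fun g : A => a * (star a * a * g)) := by
  refine Metric.mem_closure_range_iff.2 fun ε hε => ?_
  have hδ : 0 < (ε / 2) ^ 2 := by positivity
  refine ⟨cfc (fun t : ℝ => (t + (ε / 2) ^ 2)⁻¹) (star a * a), ?_⟩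
  have hsub : a - a * (star a * a * cfc (fun t : ℝ => (t + (ε / 2) ^ 2)⁻¹) (star a * a))
      = a * cfc (fun t : ℝ => (ε / 2) ^ 2 * (t + (ε / 2) ^ 2)⁻¹) (star a * a) := by
    rw [← one_sub_mul_cfc_inv_add_const (.star_mul_self a)
      (fun _ => spectrum_star_mul_self_nonneg _) hδ, mul_sub, mul_one]
  rw [dist_eq_norm, hsub]
  exact (le_of_sq_le_sq (norm_mul_cfc_mul_inv_add_const_sq_le a hδ) (by positivity)).trans_lt
    (half_lt_self hε)

theorem exists_sum_star_mul_self_eq {ι : Type*} (s : Finset ι) (x : ι → A) :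
    ∃ z : A, ∑ k ∈ s, star (x k) * x k = star z * z := by
  let _ := CStarAlgebra.spectralOrder A
  have := CStarAlgebra.spectralOrderedRing A
  exact CStarAlgebra.nonneg_iff_eq_star_mul_self.1 (s.sum_nonneg fun k _ => star_mul_self_nonneg _)

theorem exists_sum_conjTranspose_mul_self_eq {n : ℕ} {ι : Type*} (s : Finset ι)
    (x : ι → Matrix (Fin n) (Fin n) A) :
    ∃ z : Matrix (Fin n) (Fin n) A, ∑ k ∈ s, star (x k) * x k = star z * z := by
  let _ := CStarAlgebra.spectralOrder A
  have := CStarAlgebra.spectralOrderedRing A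
  exact exists_sum_star_mul_self_eq (A := CStarMatrix (Fin n) (Fin n) A) s x

theorem norm_star_mul_self_le_one_of_add_eq_one {x y : A} (h : star x * x + star y * y = 1) :
    ‖star x * x‖ ≤ 1 := by
  let _ := CStarAlgebra.spectralOrder A
  have := CStarAlgebra.spectralOrderedRing A
  rw [CStarAlgebra.norm_le_one_iff_of_nonneg _ (star_mul_self_nonneg x), ← h]
  exact le_add_of_nonneg_right (star_mul_self_nonneg y)

theorem exists_one_sub_star_mul_self_eq {x : A} (hx : ‖star x * x‖ ≤ 1) :
    ∃ y : A, 1 - star x * x = star y * y := by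
  let _ := CStarAlgebra.spectralOrder A
  have := CStarAlgebra.spectralOrderedRing A
  rw [CStarAlgebra.norm_le_one_iff_of_nonneg _ (star_mul_self_nonneg x)] at hx
  exact CStarAlgebra.nonneg_iff_eq_star_mul_self.1 (sub_nonneg.2 hx)

open scoped Matrix in
/- The entries of `zᴴ * z` are the inner products of the columns of `z` in the Hilbert C⋆-module
`Aᵐ`, so this is the Cauchy–Schwarz inequality there. Stars enter because Mathlib's convention
for a C⋆-algebra as a module over itself is `⟪x, y⟫ = y * star x`. -/
theorem norm_conjTranspose_mul_self_apply_le {m n : Type*} [Fintype m] (z : Matrix m n A)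
    (i j : n) : ‖(zᴴ * z) i j‖ ≤ √‖(zᴴ * z) i i‖ * √‖(zᴴ * z) j j‖ := by
  let _ := CStarAlgebra.spectralOrder A
  have := CStarAlgebra.spectralOrderedRing A
  let column (j : n) : WithCStarModule A (m → A) :=
    (WithCStarModule.equiv A (m → A)).symm fun k => star (z k j)
  have hinner (i j : n) : inner A (column j) (column i) = (zᴴ * z) i j := by
    simp [column, WithCStarModule.pi_inner, WithCStarModule.inner_def, Matrix.mul_apply]
  have hnorm (j : n) : ‖column j‖ = √‖(zᴴ * z) j j‖ := by
    rw [CStarModule.norm_eq_sqrt_norm_inner_self (A := A), hinner]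
  rw [← hinner, ← hnorm, ← hnorm, mul_comm]
  exact CStarModule.norm_inner_le (WithCStarModule A (m → A))

end CStarPreliminaries

namespace IsCompletelyPositive

section Algebraic

variable {R S B : Type*} [Ring R] [StarRing R] [Ring S] [StarRing S] [Ring B] [StarRing B]

theorem exists_map_star_mul_self {φ : R → B} (hφ : IsCompletelyPositive φ) (x : R) :
    ∃ z : B, φ (star x * x) = star z * z := by
  obtain ⟨z, hz⟩ := hφ 1 (Matrix.of fun _ _ => x)
  refine ⟨z 0 0, ?_⟩
  simpa [Matrix.mul_apply] using congrFun (congrFun hz 0) 0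

theorem comp {φ : S → B} {ψ : R → S} (hφ : IsCompletelyPositive φ)
    (hψ : IsCompletelyPositive ψ) : IsCompletelyPositive (φ ∘ ψ) := by
  intro n y
  obtain ⟨z, hz⟩ := hψ n y
  rw [← Matrix.map_map, hz]
  exact hφ n z

theorem of_starHom {F : Type*} [FunLike F R B] [NonUnitalRingHomClass F R B] [StarHomClass F R B]
    (f : F) : IsCompletelyPositive f := fun n y => by
  refine ⟨y.map f, ?_⟩
  rw [Matrix.map_mul, Matrix.star_eq_conjTranspose, Matrix.star_eq_conjTranspose,
    Matrix.conjTranspose_map f fun x => map_star f x]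

theorem smul_star_mul_self [Algebra ℂ B] [StarModule ℂ B] (s : B) :
    IsCompletelyPositive fun c : ℂ => c • (star s * s) := fun n y => by
  refine ⟨y.map fun c => c • s, ?_⟩
  ext i j
  simp [Matrix.mul_apply, Finset.sum_smul, smul_smul, mul_comm]

end Algebraic

variable {R B C : Type*} [Ring R] [StarRing R] [CStarAlgebra B] [CStarAlgebra C]

theorem add {φ ψ : R → B} (hφ : IsCompletelyPositive φ) (hψ : IsCompletelyPositive ψ) :
    IsCompletelyPositive (φ + ψ) := by
  intro n y
  obtain ⟨z, hz⟩ := hφ n y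
  obtain ⟨w, hw⟩ := hψ n y
  obtain ⟨v, hv⟩ := exists_sum_conjTranspose_mul_self_eq Finset.univ ![z, w]
  refine ⟨v, ?_⟩
  rw [← hv, Fin.sum_univ_two]
  change _ = star z * z + star w * w
  rw [← hz, ← hw]
  rfl

theorem norm_apply_star_mul_self_le {φ : C →ₗ[ℂ] B} (hφ : IsCompletelyPositive φ) (a : C) :
    ‖φ (star a * a)‖ ≤ ‖φ 1‖ * ‖a‖ ^ 2 := by
  let _ := CStarAlgebra.spectralOrder B
  have := CStarAlgebra.spectralOrderedRing B
  let _ := CStarAlgebra.spectralOrder C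
  have := CStarAlgebra.spectralOrderedRing C
  have hpos (x : C) (hx : 0 ≤ x) : 0 ≤ φ x := by
    obtain ⟨y, rfl⟩ := CStarAlgebra.nonneg_iff_eq_star_mul_self.1 hx
    exact CStarAlgebra.nonneg_iff_eq_star_mul_self.2 (hφ.exists_map_star_mul_self y)
  rw [sq, ← CStarRing.norm_star_mul_self]
  exact (PositiveLinearMap.mk₀ φ hpos).norm_apply_le_of_nonneg _ (star_mul_self_nonneg a)

theorem norm_apply_le {φ : C →ₗ[ℂ] B} (hφ : IsCompletelyPositive φ) (a : C) :
    ‖φ a‖ ≤ ‖φ 1‖ * ‖a‖ := by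
  obtain ⟨z, hz⟩ := hφ 2 !![1, a; 0, 0]
  have hentry (i j : Fin 2) : φ ((star !![1, a; 0, 0] * !![1, a; 0, 0] : Matrix _ _ C) i j)
      = (star z * z) i j := congrFun (congrFun hz i) j
  have h00 : φ 1 = (star z * z) 0 0 := by simpa [Matrix.mul_apply] using hentry 0 0
  have h01 : φ a = (star z * z) 0 1 := by simpa [Matrix.mul_apply] using hentry 0 1
  have h11 : φ (star a * a) = (star z * z) 1 1 := by simpa [Matrix.mul_apply] using hentry 1 1
  calc ‖φ a‖ ≤ √‖φ 1‖ * √‖φ (star a * a)‖ := by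
        rw [h00, h01, h11]
        exact norm_conjTranspose_mul_self_apply_le z 0 1
    _ ≤ √‖φ 1‖ * √(‖φ 1‖ * ‖a‖ ^ 2) := by gcongr; exact hφ.norm_apply_star_mul_self_le a
    _ = ‖φ 1‖ * ‖a‖ := by
        rw [Real.sqrt_mul (norm_nonneg _), Real.sqrt_sq (norm_nonneg _), ← mul_assoc,
          Real.mul_self_sqrt (norm_nonneg _)]

theorem diag_apply {A n : Type*} [CStarAlgebra A] [Fintype n] [DecidableEq n]
    (S : StarSubalgebra ℂ (Matrix n n A)) (C : StarSubalgebra ℂ A) [IsClosed (C : Set A)] (i : n)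
    (hC : ∀ m ∈ S, ∀ k, m k i ∈ C) :
    IsCompletelyPositive fun m : S => (⟨m.1 i i, hC m m.2 i⟩ : C) := fun d y => by
  let column (k : n) : Matrix (Fin d) (Fin d) C := y.map fun m => ⟨m.1 k i, hC m m.2 k⟩
  obtain ⟨z, hz⟩ := exists_sum_conjTranspose_mul_self_eq Finset.univ column
  refine ⟨z, ?_⟩
  rw [← hz]
  ext p q
  simpa [column, Matrix.mul_apply, Matrix.sum_apply] using Finset.sum_comm

end IsCompletelyPositive

theorem mem_unitize {A : Type*} [CStarAlgebra A] {J : Set A} {d : A} :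
    d ∈ unitize A J ↔ ∃ c : ℂ, d - c • (1 : A) ∈ J :=
  ⟨fun ⟨j, hj, c, hd⟩ => ⟨c, by rwa [hd, add_sub_cancel_right]⟩,
    fun ⟨c, hc⟩ => ⟨_, hc, c, (sub_add_cancel _ _).symm⟩⟩

namespace IsClosedTwoSidedIdeal

variable {A : Type*} [CStarAlgebra A] {J : Set A} (hJ : IsClosedTwoSidedIdeal J)
include hJ

theorem smul_mem (c : ℂ) {j : A} (hj : j ∈ J) : c • j ∈ J := by
  rw [← smul_one_mul c j]
  exact hJ.mul_mem_left _ _ hj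

theorem sub_mem {j k : A} (hj : j ∈ J) (hk : k ∈ J) : j - k ∈ J := by
  rw [sub_eq_add_neg, ← neg_one_smul ℂ k]
  exact hJ.add_mem _ hj _ (hJ.smul_mem _ hk)

theorem star_mem {j : A} (hj : j ∈ J) : star j ∈ J := by
  have hsub : star '' Set.range (fun g => j * (star j * j * g)) ⊆ J := by
    rintro _ ⟨_, ⟨g, rfl⟩, rfl⟩
    simp only [star_mul, star_star, mul_assoc]
    exact hJ.mul_mem_left _ _ (hJ.mul_mem_left _ _ (hJ.mul_mem_right _ _ hj))
  exact closure_minimal hsub hJ.isClosed (image_closure_subset_closure_image continuous_star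
    ⟨j, mem_closure_range_mul_star_mul_self_mul j, rfl⟩)

theorem eq_of_sub_smul_one_mem (h1J : (1 : A) ∉ J) {d : A} {c c' : ℂ} (hc : d - c • 1 ∈ J)
    (hc' : d - c' • 1 ∈ J) : c = c' := by
  by_contra hne
  have hmem : (c' - c) • (1 : A) ∈ J := by
    rw [sub_smul, ← sub_sub_sub_cancel_left]
    exact hJ.sub_mem hc hc'
  refine h1J ?_
  rw [← inv_smul_smul₀ (sub_ne_zero.2 (Ne.symm hne)) (1 : A)]
  exact hJ.smul_mem _ hmem

theorem isClosed_unitize : IsClosed (unitize A J) := by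
  let I : Submodule ℂ A :=
    { carrier := J
      zero_mem' := hJ.zero_mem
      add_mem' := fun hx hy => hJ.add_mem _ hx _ hy
      smul_mem' := fun c _ hx => hJ.smul_mem c hx }
  have hI : unitize A J = (I ⊔ ℂ ∙ (1 : A) : Submodule ℂ A) := by
    ext d
    simp [unitize, I, Submodule.mem_sup, Submodule.mem_span_singleton, eq_comm]
  rw [hI]
  exact I.isClosed_sup_finiteDimensional _ hJ.isClosed

theorem matrix_mul_apply_sub_smul_one_mem {m n : Matrix (Fin 2) (Fin 2) A} {c d : ℂ}
    (h10 : m 1 0 ∈ J) (hm : m 1 1 - c • 1 ∈ J) (hn : n 1 1 - d • 1 ∈ J) :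
    (m * n) 1 1 - (c * d) • 1 ∈ J := by
  have hsplit : (m * n) 1 1 - (c * d) • 1
      = m 1 0 * n 0 1 + ((m 1 1 - c • 1) * n 1 1 + c • (n 1 1 - d • 1)) := by
    rw [Matrix.mul_apply, Fin.sum_univ_two, sub_mul, smul_one_mul, smul_sub, smul_smul]
    abel
  rw [hsplit]
  exact hJ.add_mem _ (hJ.mul_mem_right _ _ h10) _
    (hJ.add_mem _ (hJ.mul_mem_right _ _ hm) _ (hJ.smul_mem c hn))

/-- The star algebra of matrices `[[a, j], [k, d]]` with `a ∈ C`, `j, k ∈ J` and `d ∈ J + ℂ1`. For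
`C = C*(X) + J` it contains `B(X,J)`. -/
def blockSubalgebra (C : StarSubalgebra ℂ A) (hJC : J ⊆ C) :
    StarSubalgebra ℂ (Matrix (Fin 2) (Fin 2) A) where
  carrier := {m | m 0 0 ∈ C ∧ m 0 1 ∈ J ∧ m 1 0 ∈ J ∧ ∃ c : ℂ, m 1 1 - c • (1 : A) ∈ J}
  mul_mem' := by
    rintro m n ⟨hm00, hm01, hm10, c, hm11⟩ ⟨hn00, hn01, hn10, d, hn11⟩
    refine ⟨?_, ?_, ?_, c * d, hJ.matrix_mul_apply_sub_smul_one_mem hm10 hm11 hn11⟩ <;>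
      rw [Matrix.mul_apply, Fin.sum_univ_two]
    · exact C.add_mem (C.mul_mem hm00 hn00) (hJC (hJ.mul_mem_left _ _ hn10))
    · exact hJ.add_mem _ (hJ.mul_mem_left _ _ hn01) _ (hJ.mul_mem_right _ _ hm01)
    · exact hJ.add_mem _ (hJ.mul_mem_right _ _ hm10) _ (hJ.mul_mem_left _ _ hn10)
  add_mem' := by
    rintro m n ⟨hm00, hm01, hm10, c, hm11⟩ ⟨hn00, hn01, hn10, d, hn11⟩
    refine ⟨C.add_mem hm00 hn00, hJ.add_mem _ hm01 _ hn01, hJ.add_mem _ hm10 _ hn10, c + d, ?_⟩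
    rw [Matrix.add_apply, add_smul, add_sub_add_comm]
    exact hJ.add_mem _ hm11 _ hn11
  algebraMap_mem' c := by
    refine ⟨?_, ?_, ?_, c, ?_⟩ <;>
      simp [Algebra.algebraMap_eq_smul_one, hJ.zero_mem, C.smul_mem C.one_mem c]
  star_mem' := by
    rintro m ⟨hm00, hm01, hm10, c, hm11⟩
    refine ⟨C.star_mem' hm00, hJ.star_mem hm10, hJ.star_mem hm01, star c, ?_⟩
    rw [Matrix.star_apply, ← star_one A, ← star_smul, ← star_sub]
    exact hJ.star_mem hm11

theorem isClosed_blockSubalgebra {C : StarSubalgebra ℂ A} (hC : IsClosed (C : Set A))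
    (hJC : J ⊆ C) : IsClosed (hJ.blockSubalgebra C hJC : Set (Matrix (Fin 2) (Fin 2) A)) := by
  have hcoe : (hJ.blockSubalgebra C hJC : Set (Matrix (Fin 2) (Fin 2) A))
      = {m | m 0 0 ∈ C} ∩ ({m | m 0 1 ∈ J} ∩ ({m | m 1 0 ∈ J} ∩ {m | m 1 1 ∈ unitize A J})) := by
    simp only [mem_unitize]
    rfl
  have hentry (i j : Fin 2) : Continuous fun m : Matrix (Fin 2) (Fin 2) A => m i j :=
    continuous_id.matrix_elem i j
  rw [hcoe]
  exact (hC.preimage (hentry 0 0)).inter ((hJ.isClosed.preimage (hentry 0 1)).inter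
    ((hJ.isClosed.preimage (hentry 1 0)).inter (hJ.isClosed_unitize.preimage (hentry 1 1))))

section Block

variable (C : StarSubalgebra ℂ A) (hJC : J ⊆ C)

/-- The character `[[a, j], [k, d]] ↦ χ d` of `blockSubalgebra`, where `χ : J + ℂ1 → ℂ` has
kernel `J`. -/
def blockCharacter (h1J : (1 : A) ∉ J) : hJ.blockSubalgebra C hJC →⋆ₐ[ℂ] ℂ :=
  have hχ (m : hJ.blockSubalgebra C hJC) := m.2.2.2.2.choose_spec
  { toFun m := m.2.2.2.2.choose
    map_one' := hJ.eq_of_sub_smul_one_mem h1J (hχ 1) (by simp [hJ.zero_mem])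
    map_mul' m n := hJ.eq_of_sub_smul_one_mem h1J (hχ (m * n))
      (hJ.matrix_mul_apply_sub_smul_one_mem m.2.2.2.1 (hχ m) (hχ n))
    map_zero' := hJ.eq_of_sub_smul_one_mem h1J (hχ 0) (by simp [hJ.zero_mem])
    map_add' m n := hJ.eq_of_sub_smul_one_mem h1J (hχ (m + n)) (by
      rw [add_smul]
      simpa [add_sub_add_comm] using hJ.add_mem _ (hχ m) _ (hχ n))
    commutes' c := hJ.eq_of_sub_smul_one_mem h1J (hχ _) (by
      simp [Algebra.algebraMap_eq_smul_one, hJ.zero_mem])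
    map_star' m := hJ.eq_of_sub_smul_one_mem h1J (hχ (star m)) (by
      simpa [star_smul] using hJ.star_mem (hχ m)) }

theorem blockCharacter_eq {h1J : (1 : A) ∉ J} {m : hJ.blockSubalgebra C hJC} {c : ℂ}
    (hc : m.1 1 1 - c • (1 : A) ∈ J) : hJ.blockCharacter C hJC h1J m = c :=
  hJ.eq_of_sub_smul_one_mem h1J m.2.2.2.2.choose_spec hc

variable {B : Type*} [CStarAlgebra B]

theorem exists_isCompletelyPositive_smul_star_mul_self (s : B) (hs : (1 : A) ∈ J → star s * s = 0) :
    ∃ T : hJ.blockSubalgebra C hJC →ₗ[ℂ] B, IsCompletelyPositive T ∧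
      ∀ m (c : ℂ), m.1 1 1 - c • (1 : A) ∈ J → T m = c • (star s * s) := by
  by_cases h1J : (1 : A) ∈ J
  · refine ⟨0, fun n y => ⟨0, by ext; simp⟩, fun m c _ => by simp [hs h1J]⟩
  · refine ⟨(LinearMap.toSpanSingleton ℂ B (star s * s)).comp
      (hJ.blockCharacter C hJC h1J : _ →ₗ[ℂ] ℂ), ?_, fun m c hc => ?_⟩
    · exact (IsCompletelyPositive.smul_star_mul_self s).comp
        (.of_starHom (hJ.blockCharacter C hJC h1J))
    · simp [hJ.blockCharacter_eq C hJC hc]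

/-- The compression `[[a, j], [k, d]] ↦ a`. -/
def topLeft : hJ.blockSubalgebra C hJC →ₗ[ℂ] C where
  toFun m := ⟨m.1 0 0, m.2.1⟩
  map_add' _ _ := rfl
  map_smul' _ _ := rfl

theorem isCompletelyPositive_topLeft [IsClosed (C : Set A)] :
    IsCompletelyPositive (hJ.topLeft C hJC) :=
  IsCompletelyPositive.diag_apply _ C 0 fun m hm k => by
    fin_cases k
    exacts [hm.1, hJC hm.2.2.1]

theorem exists_isCompletelyPositive_sub_smul_one_eq [IsClosed (C : Set A)] {φ : C →ₗ[ℂ] B}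
    (hφ : IsCompletelyPositive φ) (hφ1 : ‖φ 1‖ ≤ 1) (h1J : (1 : A) ∈ J → φ 1 = 1) :
    ∃ Ψ : hJ.blockSubalgebra C hJC →ₗ[ℂ] B, IsCompletelyPositive Ψ ∧
      ∀ m (c : ℂ), m.1 1 1 - c • (1 : A) ∈ J → Ψ m - c • 1 = φ (hJ.topLeft C hJC m - c • 1) := by
  obtain ⟨z, hz⟩ := hφ.exists_map_star_mul_self 1
  rw [star_one, one_mul] at hz
  obtain ⟨s, hs⟩ := exists_one_sub_star_mul_self_eq (x := z) (hz ▸ hφ1)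
  rw [← hz] at hs
  obtain ⟨T, hT, hT_apply⟩ := hJ.exists_isCompletelyPositive_smul_star_mul_self C hJC s
    fun h => by rw [← hs, h1J h, sub_self]
  refine ⟨φ ∘ₗ hJ.topLeft C hJC + T,
    (hφ.comp (hJ.isCompletelyPositive_topLeft C hJC)).add hT, fun m c hc => ?_⟩
  rw [LinearMap.add_apply, LinearMap.comp_apply, hT_apply m c hc, ← hs, map_sub, map_smul, smul_sub]
  abel

end Block

end IsClosedTwoSidedIdeal

section Corner

variable {A : Type*} [CStarAlgebra A] {X J : Set A}

theorem subset_calg : opSys A X J ⊆ calg A X J :=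
  (StarAlgebra.subset_adjoin ℂ _).trans (StarSubalgebra.le_topologicalClosure _)

theorem subset_cstarPlus_left : X ⊆ cstarPlus A X J :=
  (StarAlgebra.subset_adjoin ℂ _).trans <| (StarSubalgebra.le_topologicalClosure _).trans <|
    Set.subset_union_left.trans <| (StarAlgebra.subset_adjoin ℂ _).trans
      (StarSubalgebra.le_topologicalClosure _)

theorem subset_cstarPlus_right : J ⊆ cstarPlus A X J :=
  Set.subset_union_right.trans <| (StarAlgebra.subset_adjoin ℂ _).trans
    (StarSubalgebra.le_topologicalClosure _)

instance isClosed_cstarPlus : IsClosed (cstarPlus A X J : Set A) :=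
  StarSubalgebra.isClosed_topologicalClosure _

theorem calg_le_blockSubalgebra (hJ : IsClosedTwoSidedIdeal J) :
    calg A X J ≤ hJ.blockSubalgebra (cstarPlus A X J) subset_cstarPlus_right :=
  StarSubalgebra.topologicalClosure_minimal
    (StarAlgebra.adjoin_le fun _ hm =>
      ⟨subset_cstarPlus_left hm.1, hm.2.1, hm.2.2.1, mem_unitize.1 hm.2.2.2⟩)
    (hJ.isClosed_blockSubalgebra isClosed_cstarPlus _)

/-- The embedding of `A` into `M₂(A)` as the top left corner. -/
def cornerHom (A : Type*) [CStarAlgebra A] : A →⋆ₙₐ[ℂ] Matrix (Fin 2) (Fin 2) A where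
  toFun := Matrix.single 0 0
  map_smul' c a := by simp [Matrix.smul_single]
  map_zero' := Matrix.single_zero 0 0
  map_add' := Matrix.single_add 0 0
  map_mul' a b := by simp
  map_star' a := (Matrix.conjTranspose_single 0 0 a).symm

theorem continuous_cornerHom : Continuous (cornerHom A) := by
  refine continuous_matrix fun i j => ?_
  change Continuous fun a : A => Matrix.single 0 0 a i j
  simp only [Matrix.single_apply]
  split_ifs
  exacts [continuous_id, continuous_const]

variable {X : Submodule ℂ A}

theorem cornerHom_mem_opSys (hJ : IsClosedTwoSidedIdeal J) {x : A} (hx : x ∈ X) :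
    cornerHom A x ∈ opSys A X J :=
  ⟨hx, hJ.zero_mem, hJ.zero_mem, 0, hJ.zero_mem, 0, by simp [cornerHom]⟩

theorem cornerHom_mem_calg_of_mem (hJ : IsClosedTwoSidedIdeal J) {j : A} (hj : j ∈ J) :
    cornerHom A j ∈ calg A X J := by
  have hmul {k l : A} (hk : k ∈ J) (hl : l ∈ J) : cornerHom A (k * l) ∈ calg A X J := by
    have hk' : Matrix.single 0 1 k ∈ calg A X J :=
      subset_calg ⟨X.zero_mem, hk, hJ.zero_mem, 0, hJ.zero_mem, 0, by simp⟩
    have hl' : Matrix.single 1 0 l ∈ calg A X J :=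
      subset_calg ⟨X.zero_mem, hJ.zero_mem, hl, 0, hJ.zero_mem, 0, by simp⟩
    simpa [cornerHom] using mul_mem hk' hl'
  have hclosed : IsClosed (cornerHom A ⁻¹' calg A X J) :=
    (StarSubalgebra.isClosed_topologicalClosure _).preimage continuous_cornerHom
  refine closure_minimal ?_ hclosed (mem_closure_range_mul_star_mul_self_mul j)
  rintro _ ⟨g, rfl⟩
  exact hmul hj (hJ.mul_mem_right _ _ (hJ.mul_mem_left _ _ hj))

theorem cornerHom_mem_calg (hJ : IsClosedTwoSidedIdeal J) (h1 : (1 : A) ∈ X) {a : A}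
    (ha : a ∈ cstarPlus A X J) : cornerHom A a ∈ calg A X J := by
  let S : StarSubalgebra ℂ A :=
    ((calg A X J).toNonUnitalStarSubalgebra.comap (cornerHom A)).toStarSubalgebra
      (subset_calg (cornerHom_mem_opSys hJ h1))
  have hS : IsClosed (S : Set A) :=
    (StarSubalgebra.isClosed_topologicalClosure _).preimage continuous_cornerHom
  have hXS : cstarGen A X ≤ S := StarSubalgebra.topologicalClosure_minimal
    (StarAlgebra.adjoin_le fun _ hx => subset_calg (cornerHom_mem_opSys hJ hx)) hS
  exact StarSubalgebra.topologicalClosure_minimal (StarAlgebra.adjoin_le (Set.union_subset hXS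
    fun _ => cornerHom_mem_calg_of_mem hJ)) hS ha

/-- The top left corner embedding `C*(X) + J → B(X,J)`. -/
def corner (hJ : IsClosedTwoSidedIdeal J) (h1 : (1 : A) ∈ X) :
    cstarPlus A X J →⋆ₙₐ[ℂ] calg A X J :=
  NonUnitalStarAlgHom.codRestrict
    ((cornerHom A).comp (NonUnitalStarSubalgebraClass.subtype (cstarPlus A X J)))
    (calg A X J).toNonUnitalStarSubalgebra fun a => cornerHom_mem_calg hJ h1 a.2

theorem coe_corner (hJ : IsClosedTwoSidedIdeal J) (h1 : (1 : A) ∈ X) (a : cstarPlus A X J) :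
    (corner hJ h1 a : Matrix (Fin 2) (Fin 2) A) = Matrix.single 0 0 (a : A) :=
  rfl

end Corner

section AdaptedPairs

variable {A : Type*} [CStarAlgebra A] {X : Submodule ℂ A} {J : Set A}
  {H : Type*} [NormedAddCommGroup H] [InnerProductSpace ℂ H] [CompleteSpace H]
  {ρ Ψ : calg A X J → (H →L[ℂ] H)} {π φ : cstarPlus A X J → (H →L[ℂ] H)}

namespace IsUCPMap

theorem norm_apply_le_one_of_isStarProjection {R : Type*} [Ring R] [Algebra ℂ R] [StarRing R]
    {Φ : R → (H →L[ℂ] H)} (hΦ : IsUCPMap Φ) {e : R} (he : IsStarProjection e) : ‖Φ e‖ ≤ 1 := by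
  have hself {f : R} (hf : IsStarProjection f) : star f * f = f := by
    rw [hf.isSelfAdjoint.star_eq, hf.isIdempotentElem.eq]
  obtain ⟨z, hz⟩ := hΦ.cp.exists_map_star_mul_self e
  obtain ⟨w, hw⟩ := hΦ.cp.exists_map_star_mul_self (1 - e)
  rw [hself he] at hz
  rw [hself he.one_sub] at hw
  rw [hz]
  refine norm_star_mul_self_le_one_of_add_eq_one (y := w) ?_
  rw [← hz, ← hw, ← hΦ.map_add, add_sub_cancel, hΦ.map_one]

theorem norm_apply_corner_le (hΨ : IsUCPMap Ψ) (hJ : IsClosedTwoSidedIdeal J) (h1 : (1 : A) ∈ X)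
    (a : cstarPlus A X J) : ‖Ψ (corner hJ h1 a)‖ ≤ ‖a‖ := by
  let φ : cstarPlus A X J →ₗ[ℂ] (H →L[ℂ] H) :=
    { toFun := Ψ
      map_add' := hΨ.map_add
      map_smul' := hΨ.map_smul } ∘ₗ (corner hJ h1 : _ →ₗ[ℂ] calg A X J)
  have hφ : IsCompletelyPositive φ := hΨ.cp.comp (.of_starHom (corner hJ h1))
  have hφ1 : ‖φ 1‖ ≤ 1 :=
    hΨ.norm_apply_le_one_of_isStarProjection ((IsStarProjection.one _).map (corner hJ h1))
  exact (hφ.norm_apply_le a).trans (mul_le_of_le_one_left (norm_nonneg a) hφ1)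

end IsUCPMap

theorem exists_sub_smul_one_mem (hJ : IsClosedTwoSidedIdeal J) (m : calg A X J) :
    ∃ (c : ℂ) (a : cstarPlus A X J), m.1 1 1 - c • (1 : A) ∈ J ∧
      (a : A) = m.1 0 0 - c • (1 : A) := by
  obtain ⟨h00, -, -, c, hc⟩ := calg_le_blockSubalgebra hJ m.2
  exact ⟨c, ⟨m.1 0 0, h00⟩ - c • 1, hc, rfl⟩

namespace IsAdaptedPair

theorem apply_corner (h : IsAdaptedPair (X : Set A) J ρ π) (hJ : IsClosedTwoSidedIdeal J)
    (h1 : (1 : A) ∈ X) (a : cstarPlus A X J) : ρ (corner hJ h1 a) = π a := by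
  simpa using h (corner hJ h1 a) 0 a (by simp [coe_corner, hJ.zero_mem])
    (by simp [coe_corner])

theorem right_unique (h : IsAdaptedPair (X : Set A) J ρ π) (h' : IsAdaptedPair (X : Set A) J ρ φ)
    (hJ : IsClosedTwoSidedIdeal J) (h1 : (1 : A) ∈ X) : π = φ :=
  funext fun a => (h.apply_corner hJ h1 a).symm.trans (h'.apply_corner hJ h1 a)

theorem left_unique (h : IsAdaptedPair (X : Set A) J ρ π) (h' : IsAdaptedPair (X : Set A) J Ψ π)
    (hJ : IsClosedTwoSidedIdeal J) : ρ = Ψ := by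
  funext m
  obtain ⟨c, a, hc, ha⟩ := exists_sub_smul_one_mem hJ m
  exact sub_left_injective ((h m c a hc ha).trans (h' m c a hc ha).symm)

theorem eq_of_mem_opSys (h : IsAdaptedPair (X : Set A) J ρ π) (h' : IsAdaptedPair (X : Set A) J Ψ φ)
    (hJ : IsClosedTwoSidedIdeal J) (h1 : (1 : A) ∈ X)
    (heq : ∀ a : cstarPlus A X J, (a : A) ∈ X → π a = φ a) {m : calg A X J}
    (hm : m.1 ∈ opSys A X J) : ρ m = Ψ m := by
  obtain ⟨c, a, hc, ha⟩ := exists_sub_smul_one_mem hJ m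
  have haX : (a : A) ∈ X := ha ▸ X.sub_mem hm.1 (X.smul_mem c h1)
  refine sub_left_injective (b := c • 1) ?_
  exact (h m c a hc ha).trans ((heq a haX).trans (h' m c a hc ha).symm)

/- When `1 ∈ J` the scalar in the definition of an adapted pair is arbitrary; compare the scalars
`0` and `1`. -/
theorem map_one_of_one_mem (h : IsAdaptedPair (X : Set A) J ρ π) (hJ : IsClosedTwoSidedIdeal J)
    (h1 : (1 : A) ∈ X) (h1J : (1 : A) ∈ J) : π 1 = π 0 + 1 := by
  rw [← h.apply_corner hJ h1, ← sub_eq_iff_eq_add]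
  simpa using h (corner hJ h1 1) 1 0
    (by simpa [coe_corner] using hJ.smul_mem (-1) h1J) (by simp [coe_corner])

theorem comp_corner (h : IsAdaptedPair (X : Set A) J ρ π) (hJ : IsClosedTwoSidedIdeal J)
    (h1 : (1 : A) ∈ X) (hadd : ∀ m n, Ψ (m + n) = Ψ m + Ψ n)
    (hΨ : ∀ m : calg A X J, m.1 ∈ opSys A X J → Ψ m = ρ m) :
    IsAdaptedPair (X : Set A) J Ψ (Ψ ∘ corner hJ h1) := by
  intro m c a hc ha
  obtain ⟨-, h01, h10, -⟩ := calg_le_blockSubalgebra hJ m.2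
  let r : calg A X J := m - corner hJ h1 a
  have hr00 : r.1 0 0 = c • (1 : A) := by simp [r, coe_corner, ha]
  have hr11 : r.1 1 1 = m.1 1 1 := by simp [r, coe_corner]
  have hr : r.1 ∈ opSys A X J :=
    ⟨hr00 ▸ X.smul_mem c h1, by simpa [r, coe_corner], by simpa [r, coe_corner],
      mem_unitize.2 ⟨c, hr11 ▸ hc⟩⟩
  have hπ0 : π 0 = 0 := by
    rw [← h.apply_corner hJ h1, ← hΨ _ (cornerHom_mem_opSys hJ X.zero_mem)]
    simpa using hadd 0 0
  have hΨr : Ψ r = c • 1 := by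
    rw [hΨ r hr, ← sub_eq_zero, ← hπ0]
    exact h r c 0 (hr11 ▸ hc) (by simp [hr00])
  rw [← add_sub_cancel (corner hJ h1 a) m, hadd, hΨr, add_sub_cancel_right]
  rfl

end IsAdaptedPair

theorem exists_isUCPMap_isAdaptedPair (hJ : IsClosedTwoSidedIdeal J)
    {φ : cstarPlus A X J →ₗ[ℂ] (H →L[ℂ] H)} (hφ : IsCompletelyPositive φ) (hφ1 : ‖φ 1‖ ≤ 1)
    (h1J : (1 : A) ∈ J → φ 1 = 1) :
    ∃ Ψ : calg A X J → (H →L[ℂ] H), IsUCPMap Ψ ∧ IsAdaptedPair (X : Set A) J Ψ φ := by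
  obtain ⟨Φ, hΦ, hΦφ⟩ := hJ.exists_isCompletelyPositive_sub_smul_one_eq (cstarPlus A X J)
    subset_cstarPlus_right hφ hφ1 h1J
  let ι := StarSubalgebra.inclusion (calg_le_blockSubalgebra (X := (X : Set A)) hJ)
  refine ⟨Φ ∘ ι, ⟨?_, ?_, hΦ.comp (.of_starHom ι), ?_⟩, fun m c a hc ha => ?_⟩
  · simp
  · simp
  · have hΦ1 : Φ 1 - (1 : ℂ) • 1 = φ (1 - (1 : ℂ) • 1) := hΦφ 1 1 (by simp [hJ.zero_mem])
    simpa [sub_eq_zero] using hΦ1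
  · rw [Function.comp, hΦφ (ι m) c hc]
    exact congrArg φ (Subtype.ext ha.symm)

end AdaptedPairs

theorem stmt6_general {A : Type*} [CStarAlgebra A] (X : Submodule ℂ A) (h1 : (1 : A) ∈ X)
    {J : Set A} (hJ : IsClosedTwoSidedIdeal J)
    {H : Type*} [NormedAddCommGroup H] [InnerProductSpace ℂ H] [CompleteSpace H]
    (ρ : calg A X J → (H →L[ℂ] H)) (π : cstarPlus A X J → (H →L[ℂ] H))
    (hadapted : IsAdaptedPair (X : Set A) J ρ π) :
    HasUEP (X : Set A) J ρ ↔
      (∀ φ : cstarPlus A X J → (H →L[ℂ] H),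
        (∀ x y, φ (x + y) = φ x + φ y) →
        (∀ (c : ℂ) (x : cstarPlus A X J), φ (c • x) = c • φ x) →
        IsCompletelyPositive φ →
        (∀ x : cstarPlus A X J, ‖φ x‖ ≤ ‖x‖) →
        (∀ x : cstarPlus A X J, (x : A) ∈ X → φ x = π x) →
        φ = π) := by
  constructor
  · intro hρ φ hadd hsmul hcp hle hφπ
    let φ' : cstarPlus A X J →ₗ[ℂ] (H →L[ℂ] H) := ⟨⟨φ, hadd⟩, hsmul⟩
    have hφ1 : ‖φ 1‖ ≤ 1 := (hle 1).trans (IsStarProjection.one _).norm_le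
    have hone (h1J : (1 : A) ∈ J) : φ 1 = 1 := by
      have hφ0 : φ 0 = 0 := map_zero φ'
      rw [hφπ 1 h1, hadapted.map_one_of_one_mem hJ h1 h1J, ← hφπ 0 X.zero_mem, hφ0, zero_add]
    obtain ⟨Ψ, hΨ, hΨφ⟩ := exists_isUCPMap_isAdaptedPair hJ (φ := φ') hcp hφ1 hone
    obtain rfl := hρ Ψ hΨ fun m hm => hΨφ.eq_of_mem_opSys hadapted hJ h1 hφπ hm
    exact hΨφ.right_unique hadapted hJ h1
  · intro hπ Ψ hΨ hΨρ
    have hφπ : Ψ ∘ corner hJ h1 = π := by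
      refine hπ _ (fun a b => ?_) (fun c a => ?_) (hΨ.cp.comp (.of_starHom _))
        (hΨ.norm_apply_corner_le hJ h1) (fun a ha => ?_)
      · simp [hΨ.map_add]
      · simp [hΨ.map_smul]
      · exact (hΨρ _ (cornerHom_mem_opSys hJ ha)).trans (hadapted.apply_corner hJ h1 a)
    have hΨπ := hφπ ▸ hadapted.comp_corner hJ h1 hΨ.map_add hΨρ
    exact hΨπ.left_unique hadapted hJ

/-- The subspace of `A` underlying an operator system. -/
def IsOperatorSystem.toSubmodule {A : Type*} [CStarAlgebra A] {X : Set A}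
    (hX : IsOperatorSystem X) : Submodule ℂ A where
  carrier := X
  zero_mem' := by simpa using hX.smul_mem 0 1 hX.one_mem
  add_mem' hx hy := hX.add_mem _ hx _ hy
  smul_mem' c _ hx := hX.smul_mem c _ hx

/-- Theorem 2.8: let `ρ : B(X,J) → B(H)` be a unital *-representation
annihilating `M₂(J)` and let `π : C*(X)+J → B(H)` be the (unique) *-representation
annihilating `J` such that the pair `(ρ, π)` is `(X,J)`-adapted.  Then `ρ` has the unique
extension property with respect to `S(X,J)` if and only if `π` is the unique contractive
completely positive extension of `π|_X` to `C*(X)+J`. -/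
theorem stmt6 {A : Type*} [CStarAlgebra A] (X J : Set A)
    (hX : IsOperatorSystem X) (hJ : IsClosedTwoSidedIdeal J)
    {H : Type*} [NormedAddCommGroup H] [InnerProductSpace ℂ H] [CompleteSpace H]
    (ρ : ↥(calg A X J) → (H →L[ℂ] H))
    (hρ : IsUnitalStarRep ρ) (hρ_ann : AnnihilatesM2 X J ρ)
    (π : ↥(cstarPlus A X J) → (H →L[ℂ] H))
    (hπ : IsStarRep π) (hπ_ann : AnnihilatesJ X J π)
    (hadapted : IsAdaptedPair X J ρ π) :
    HasUEP X J ρ ↔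
      (∀ φ : ↥(cstarPlus A X J) → (H →L[ℂ] H),
        (∀ x y, φ (x + y) = φ x + φ y) →
        (∀ (c : ℂ) (x : ↥(cstarPlus A X J)), φ (c • x) = c • φ x) →
        IsCompletelyPositive φ →
        (∀ x : ↥(cstarPlus A X J), ‖φ x‖ ≤ ‖x‖) →
        (∀ x : ↥(cstarPlus A X J), (x : A) ∈ X → φ x = π x) →
        φ = π) :=
  stmt6_general hX.toSubmodule hX.one_mem hJ ρ π hadapted

end ArvesonCounterexample
end
end
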